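/- arXiv:2012.09416 — 8 statements merged into one kernel-verified Lean document; each statement's English description precedes it below -/
import Mathlib

section
/- Suppose A : [0,T) → M_n(ℂ) is differentiable and satisfies A'(t) = A(t)·[A(t), A(t)*] for all t ∈ [0,T). Then for every integer m ≥ 1 and every t ∈ [0,T), tr(A(t)^m) = tr(A(0)^m); consequently the characteristic polynomial of A(t), and hence the spectrum of A(t), is equal to that of A(0) for all t. -/
/-!
STATEMENT 5: If A : [0,T) → M_n(ℂ) is differentiable with A' = A[A,A*], then
tr(A(t)^m) = tr(A(0)^m) for all m ≥ 1 and all t, hence the characteristic polynomial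
(and the spectrum) of A(t) is constant in t.
-/

open Matrix Set

attribute [local instance] Matrix.frobeniusSeminormedAddCommGroup
  Matrix.frobeniusNormedAddCommGroup Matrix.frobeniusNormedSpace

namespace Matrix

variable {ι : Type*} [Fintype ι]

theorem trace_mul_commutator_eq_zero {C M : Matrix ι ι ℂ} (h : Commute C M) (B : Matrix ι ι ℂ) :
    (C * (M * B - B * M)).trace = 0 := by
  rw [mul_sub, trace_sub, ← mul_assoc, h.eq, mul_assoc, trace_mul_comm M, mul_assoc, sub_self]

theorem hasDerivWithinAt_apply {M : ℝ → Matrix ι ι ℂ} {M' : Matrix ι ι ℂ} {s : Set ℝ} {t : ℝ}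
    (hM : HasDerivWithinAt M M' s t) (i j : ι) :
    HasDerivWithinAt (fun u => M u i j) (M' i j) s t :=
  (LinearMap.toContinuousLinearMap (entryLinearMap ℝ ℂ i j)).hasFDerivAt.comp_hasDerivWithinAt t hM

variable [DecidableEq ι]

/-- Jacobi's formula for the derivative of a determinant. -/
theorem hasDerivWithinAt_det {M : ℝ → Matrix ι ι ℂ} {M' : Matrix ι ι ℂ} {s : Set ℝ} {t : ℝ}
    (hM : ∀ i j, HasDerivWithinAt (fun u => M u i j) (M' i j) s t) :
    HasDerivWithinAt (fun u => (M u).det) ((M t).adjugate * M').trace s t := by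
  have key : ((M t).adjugate * M').trace =
      ∑ σ : Equiv.Perm ι, ((Equiv.Perm.sign σ : ℤ) : ℂ) *
        ∑ i, (∏ j ∈ Finset.univ.erase i, M t (σ j) j) • M' (σ i) i := by
    have hcol (i : ι) : ((M t).adjugate * M') i i = ((M t).updateCol i (fun j => M' j i)).det := by
      rw [← cramer_apply, cramer_eq_adjugate_mulVec]
      rfl
    simp only [trace, diag_apply, hcol, det_apply', Finset.mul_sum]
    rw [Finset.sum_comm]
    refine Finset.sum_congr rfl fun σ _ => Finset.sum_congr rfl fun i _ => ?_
    rw [← Finset.mul_prod_erase _ _ (Finset.mem_univ i), updateCol_self, smul_eq_mul,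
      mul_comm (M' _ _)]
    congr 2
    exact Finset.prod_congr rfl fun j hj => updateCol_ne (Finset.ne_of_mem_erase hj)
  rw [key]
  simp only [det_apply']
  exact HasDerivWithinAt.fun_sum fun σ _ =>
    (HasDerivWithinAt.fun_finsetProd fun i _ => hM (σ i) i).const_mul _

theorem commute_adjugate_scalar_sub (x : ℂ) (M : Matrix ι ι ℂ) :
    Commute (scalar ι x - M).adjugate M := by
  have h : Commute (scalar ι x - M).adjugate (scalar ι x - M) := by
    rw [Commute, SemiconjBy, adjugate_mul, mul_adjugate]
  have h' : Commute (scalar ι x - M).adjugate (scalar ι x) :=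
    (scalar_commute x (Commute.all x) _).symm
  simpa using h'.sub_right h

section LaxPair

variable {A : ℝ → Matrix ι ι ℂ} {B : Matrix ι ι ℂ} {s : Set ℝ} {t : ℝ}

attribute [local instance] Matrix.frobeniusNormedRing Matrix.frobeniusNormedAlgebra in
theorem hasDerivWithinAt_pow_commutator
    (hA : HasDerivWithinAt A (A t * B - B * A t) s t) (m : ℕ) :
    HasDerivWithinAt (fun u => A u ^ m) (A t ^ m * B - B * A t ^ m) s t := by
  induction m with
  | zero =>
    simp only [pow_zero]
    exact (hasDerivWithinAt_const t s (1 : Matrix ι ι ℂ)).congr_deriv (by simp)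
  | succ m ih =>
    simp only [pow_succ]
    refine (ih.fun_mul hA).congr_deriv ?_
    noncomm_ring

theorem hasDerivWithinAt_trace_pow_commutator
    (hA : HasDerivWithinAt A (A t * B - B * A t) s t) (m : ℕ) :
    HasDerivWithinAt (fun u => (A u ^ m).trace) 0 s t := by
  have h := (LinearMap.toContinuousLinearMap
    (traceLinearMap ι ℝ ℂ)).hasFDerivAt.comp_hasDerivWithinAt t
      (hasDerivWithinAt_pow_commutator hA m)
  refine h.congr_deriv ?_
  change (A t ^ m * B - B * A t ^ m).trace = 0
  rw [trace_sub, trace_mul_comm B, sub_self]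

theorem hasDerivWithinAt_eval_charpoly_commutator
    (hA : HasDerivWithinAt A (A t * B - B * A t) s t) (x : ℂ) :
    HasDerivWithinAt (fun u => (A u).charpoly.eval x) 0 s t := by
  simp only [eval_charpoly]
  refine (hasDerivWithinAt_det (hasDerivWithinAt_apply (hA.const_sub (scalar ι x)))).congr_deriv ?_
  rw [mul_neg, trace_neg, trace_mul_commutator_eq_zero (commute_adjugate_scalar_sub x _), neg_zero]

end LaxPair

end Matrix

/-- A function with vanishing derivative on a convex set of reals is constant there. -/
theorem Convex.eq_of_hasDerivWithinAt_zero {f : ℝ → ℂ} {s : Set ℝ} (hs : Convex ℝ s)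
    (hf : ∀ t ∈ s, HasDerivWithinAt f 0 s t) {a b : ℝ} (ha : a ∈ s) (hb : b ∈ s) : f a = f b := by
  have h := hs.norm_image_sub_le_of_norm_hasDerivWithin_le (C := 0) hf (by simp) hb ha
  simpa [sub_eq_zero] using h

theorem stmt5 {n : ℕ} {T : EReal} (hT : 0 < T)
    {A : ℝ → Matrix (Fin n) (Fin n) ℂ}
    (hA : ∀ t ∈ {s : ℝ | 0 ≤ s ∧ (s : EReal) < T},
      HasDerivWithinAt A (A t * (A t * (A t)ᴴ - (A t)ᴴ * A t))
        {s : ℝ | 0 ≤ s ∧ (s : EReal) < T} t) :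
    ∀ t ∈ {s : ℝ | 0 ≤ s ∧ (s : EReal) < T},
      (∀ m : ℕ, 1 ≤ m → (A t ^ m).trace = (A 0 ^ m).trace) ∧
      (A t).charpoly = (A 0).charpoly ∧
      spectrum ℂ (A t) = spectrum ℂ (A 0) := by
  have hconv : Convex ℝ {s : ℝ | 0 ≤ s ∧ (s : EReal) < T} := by
    refine OrdConnected.convex ⟨fun a ha b hb c hc => ⟨ha.1.trans hc.1, ?_⟩⟩
    exact (EReal.coe_le_coe_iff.2 hc.2).trans_lt hb.2
  have h0 : (0 : ℝ) ∈ {s : ℝ | 0 ≤ s ∧ (s : EReal) < T} := ⟨le_rfl, by simpa using hT⟩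
  have hLax : ∀ t ∈ {s : ℝ | 0 ≤ s ∧ (s : EReal) < T},
      HasDerivWithinAt A (A t * (A t * (A t)ᴴ) - A t * (A t)ᴴ * A t)
        {s : ℝ | 0 ≤ s ∧ (s : EReal) < T} t := fun t ht =>
    (hA t ht).congr_deriv (by noncomm_ring)
  intro t ht
  have hchar : (A t).charpoly = (A 0).charpoly := Polynomial.funext fun x =>
    hconv.eq_of_hasDerivWithinAt_zero
      (fun u hu => hasDerivWithinAt_eval_charpoly_commutator (hLax u hu) x) ht h0
  refine ⟨fun m _ => hconv.eq_of_hasDerivWithinAt_zero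
    (fun u hu => hasDerivWithinAt_trace_pow_commutator (hLax u hu) m) ht h0, hchar, ?_⟩
  ext x
  rw [mem_spectrum_iff_isRoot_charpoly, mem_spectrum_iff_isRoot_charpoly, hchar]
end

section
/- For every A ∈ M_n(ℂ), the real part of tr(A·[A,A*]·A*) is nonpositive — equivalently ‖A²‖ ≤ ‖AA*‖ in the Frobenius norm — with equality if and only if A is normal. -/
/-!
STATEMENT 6: For every A ∈ M_n(ℂ), Re tr(A·[A,A*]·A*) ≤ 0, with equality iff A is normal.
-/

open Matrix

/-- With `C = [A, A*]`, one has `tr (C* C) = -2 tr (A C A*)`. -/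
theorem trace_conjTranspose_mul_self_commutator {m R : Type*} [Fintype m] [CommRing R] [StarRing R]
    (A : Matrix m m R) :
    ((A * Aᴴ - Aᴴ * A)ᴴ * (A * Aᴴ - Aᴴ * A)).trace =
      -2 * (A * (A * Aᴴ - Aᴴ * A) * Aᴴ).trace := by
  have h₁ : (A * (Aᴴ * (Aᴴ * A))).trace = (A * (A * (Aᴴ * Aᴴ))).trace := by
    rw [← trace_mul_comm (A * (Aᴴ * Aᴴ)) A]
    simp only [Matrix.mul_assoc]
  have h₂ : (Aᴴ * (A * (A * Aᴴ))).trace = (A * (A * (Aᴴ * Aᴴ))).trace := by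
    rw [trace_mul_comm]
    simp only [Matrix.mul_assoc]
  have h₃ : (Aᴴ * (A * (Aᴴ * A))).trace = (A * (Aᴴ * (A * Aᴴ))).trace := by
    rw [trace_mul_comm]
    simp only [Matrix.mul_assoc]
  simp only [conjTranspose_sub, conjTranspose_mul, conjTranspose_conjTranspose, Matrix.mul_sub,
    Matrix.sub_mul, Matrix.mul_assoc, trace_sub, h₁, h₂, h₃]
  ring

open scoped ComplexOrder in
theorem stmt6 {n : ℕ} (A : Matrix (Fin n) (Fin n) ℂ) :
    ((A * (A * Aᴴ - Aᴴ * A) * Aᴴ).trace).re ≤ 0 ∧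
      (((A * (A * Aᴴ - Aᴴ * A) * Aᴴ).trace).re = 0 ↔ A * Aᴴ = Aᴴ * A) := by
  have h_re := congrArg Complex.re (trace_conjTranspose_mul_self_commutator A)
  have h_nonneg := Complex.nonneg_iff.mp
    (posSemidef_conjTranspose_mul_self (A * Aᴴ - Aᴴ * A)).trace_nonneg
  simp only [Complex.mul_re, Complex.neg_re, Complex.neg_im, Complex.re_ofNat,
    Complex.im_ofNat, neg_zero, zero_mul, sub_zero] at h_re
  refine ⟨by linarith [h_nonneg.1], fun h => ?_, fun h => by simp [h]⟩
  rw [← sub_eq_zero, ← trace_conjTranspose_mul_self_eq_zero_iff]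
  exact Complex.ext (by rw [h_re, h]; simp) h_nonneg.2.symm
end

section
/- Suppose A : [0,T) → M_n(ℂ) is differentiable and satisfies A'(t) = A(t)·[A(t), A(t)*] for all t ∈ [0,T). Then the function t ↦ ‖A(t)‖² (the squared Frobenius norm, tr(A(t)A(t)*)) is monotonically non-increasing, and its derivative at a time t vanishes if and only if A(t) is normal. -/
/-!
STATEMENT 7: If A : [0,∞) → M_n(ℂ) solves A' = A[A,A*], then t ↦ ‖A t‖² = tr(A(t)A(t)*)
is monotonically non-increasing, and its derivative at a time t vanishes iff A(t) is normal.
-/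

open Matrix Set

attribute [local instance] Matrix.frobeniusSeminormedAddCommGroup
  Matrix.frobeniusNormedAddCommGroup Matrix.frobeniusNormedSpace

/-- The derivative of the squared Frobenius norm along a differentiable curve of matrices. -/
theorem hasDerivWithinAt_re_trace_mul_conjTranspose {m n : Type*} [Fintype m] [Fintype n]
    {A : ℝ → Matrix m n ℂ} {A' : Matrix m n ℂ} {s : Set ℝ} {t : ℝ}
    (hA : HasDerivWithinAt A A' s t) :
    HasDerivWithinAt (fun s => ((A s * (A s)ᴴ).trace).re)
      (2 * ((A' * (A t)ᴴ).trace).re) s t := by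
  have entry (i : m) (j : n) : HasDerivWithinAt (fun s => A s i j) (A' i j) s t :=
    (LinearMap.toContinuousLinearMap
      (Matrix.entryLinearMap ℝ ℂ i j)).hasFDerivAt.comp_hasDerivWithinAt t hA
  have h : HasDerivWithinAt (fun s => ((A s * (A s)ᴴ).trace))
      (∑ i, ∑ j, (A' i j * star (A t i j) + A t i j * star (A' i j))) s t := by
    simp only [Matrix.trace, Matrix.diag, Matrix.mul_apply, Matrix.conjTranspose_apply]
    exact HasDerivWithinAt.fun_sum fun i _ => HasDerivWithinAt.fun_sum fun j _ =>
      (entry i j).mul (entry i j).star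
  refine (Complex.reCLM.hasFDerivAt.comp_hasDerivWithinAt t h).congr_deriv ?_
  simp only [Matrix.trace, Matrix.diag, Matrix.mul_apply, Matrix.conjTranspose_apply,
    Complex.reCLM_apply, Complex.re_sum, Finset.mul_sum]
  refine Finset.sum_congr rfl fun i _ => Finset.sum_congr rfl fun j _ => ?_
  simp
  ring

/-- Pairing `A * [A, Aᴴ]` with `A` yields minus half the squared Frobenius norm of `[A, Aᴴ]`. -/
theorem two_mul_trace_mul_commutator_mul_conjTranspose {n R : Type*} [Fintype n] [CommRing R]
    [StarRing R] (A : Matrix n n R) :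
    2 * (A * (A * Aᴴ - Aᴴ * A) * Aᴴ).trace =
      -((A * Aᴴ - Aᴴ * A) * (A * Aᴴ - Aᴴ * A)ᴴ).trace := by
  have h₁ : (A * (A * Aᴴ) * Aᴴ).trace = (A * Aᴴ * (Aᴴ * A)).trace := by
    rw [Matrix.mul_assoc, Matrix.trace_mul_comm, Matrix.mul_assoc (A * Aᴴ)]
  have h₂ : (Aᴴ * A * (A * Aᴴ)).trace = (A * Aᴴ * (Aᴴ * A)).trace := Matrix.trace_mul_comm _ _
  have h₃ : (A * (Aᴴ * A) * Aᴴ).trace = (A * Aᴴ * (A * Aᴴ)).trace := by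
    simp only [Matrix.mul_assoc]
  have h₄ : (Aᴴ * A * (Aᴴ * A)).trace = (A * Aᴴ * (A * Aᴴ)).trace := by
    rw [Matrix.mul_assoc, Matrix.trace_mul_comm]
    simp only [Matrix.mul_assoc]
  simp only [Matrix.conjTranspose_sub, Matrix.conjTranspose_mul, Matrix.conjTranspose_conjTranspose,
    Matrix.mul_sub, Matrix.sub_mul, Matrix.trace_sub, h₁, h₂, h₃, h₄]
  ring

theorem stmt7 {n : ℕ} {A : ℝ → Matrix (Fin n) (Fin n) ℂ}
    (hA : ∀ t ∈ Ici (0 : ℝ),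
      HasDerivWithinAt A (A t * (A t * (A t)ᴴ - (A t)ᴴ * A t)) (Ici 0) t) :
    AntitoneOn (fun t => ((A t * (A t)ᴴ).trace).re) (Ici 0) ∧
      ∀ t ∈ Ici (0 : ℝ), ∀ d : ℝ,
        HasDerivWithinAt (fun s => ((A s * (A s)ᴴ).trace).re) d (Ici 0) t →
        (d = 0 ↔ A t * (A t)ᴴ = (A t)ᴴ * A t) := by
  have hderiv (t : ℝ) (ht : t ∈ Ici (0 : ℝ)) :
      HasDerivWithinAt (fun s => ((A s * (A s)ᴴ).trace).re)
        (-((A t * (A t)ᴴ - (A t)ᴴ * A t) * (A t * (A t)ᴴ - (A t)ᴴ * A t)ᴴ).trace.re)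
        (Ici 0) t := by
    convert hasDerivWithinAt_re_trace_mul_conjTranspose (hA t ht) using 1
    simpa using
      (congrArg Complex.re (two_mul_trace_mul_commutator_mul_conjTranspose (A t))).symm
  open scoped ComplexOrder in
  have hnonneg (C : Matrix (Fin n) (Fin n) ℂ) : 0 ≤ (C * Cᴴ).trace :=
    (Matrix.posSemidef_self_mul_conjTranspose C).trace_nonneg
  refine ⟨antitoneOn_of_hasDerivWithinAt_nonpos (convex_Ici 0)
    (fun t ht => (hderiv t ht).continuousWithinAt)
    (fun t ht => (hderiv t (interior_subset ht)).mono interior_subset)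
    (fun t _ => neg_nonpos.mpr (Complex.nonneg_iff.mp (hnonneg _)).1), fun t ht d hd => ?_⟩
  rw [(uniqueDiffOn_Ici (0 : ℝ) t ht).eq_deriv _ hd (hderiv t ht), neg_eq_zero,
    ← sub_eq_zero (a := A t * (A t)ᴴ), ← Matrix.trace_mul_conjTranspose_self_eq_zero_iff]
  exact ⟨fun h => Complex.ext h (Complex.nonneg_iff.mp (hnonneg _)).2.symm,
    fun h => by rw [h, Complex.zero_re]⟩
end

section
/- For every A₀ ∈ M_n(ℂ) there exists a differentiable curve A : [0,∞) → M_n(ℂ) with A(0) = A₀ satisfying A'(t) = A(t)·[A(t), A(t)*] for all t ≥ 0. (The ODE A' = A[A,A*] has global forward-in-time solutions.) -/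
/-!
STATEMENT 8: For every A₀ ∈ M_n(ℂ) there is a global forward solution of A' = A[A,A*]
with A(0) = A₀.
-/

open Matrix Set

attribute [local instance] Matrix.frobeniusSeminormedAddCommGroup
  Matrix.frobeniusNormedAddCommGroup Matrix.frobeniusNormedSpace

open scoped NNReal

/-- A bounded Lipschitz vector field on a Banach space has integral curves defined for all time. -/
theorem LipschitzWith.exists_forall_hasDerivAt_of_norm_le {E : Type*} [NormedAddCommGroup E]
    [NormedSpace ℝ E] [CompleteSpace E] {f : E → E} {K M : ℝ≥0} (hf : LipschitzWith K f)
    (hM : ∀ x, ‖f x‖ ≤ M) (x₀ : E) :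
    ∃ α : ℝ → E, α 0 = x₀ ∧ ∀ t, HasDerivAt α (f (α t)) t := by
  have hloc (T : ℝ) (hT : 0 < T) :
      ∃ α : ℝ → E, α 0 = x₀ ∧ ∀ t ∈ Ioo (-T) T, HasDerivAt α (f (α t)) t := by
    have h0 : (0 : ℝ) ∈ Icc (-T) T := ⟨by linarith, hT.le⟩
    have hPL : IsPicardLindelof (fun _ ↦ f) (⟨0, h0⟩ : Icc (-T) T) x₀ (M * T.toNNReal) 0 M K :=
      { lipschitzOnWith := fun _ _ ↦ hf.lipschitzOnWith
        continuousOn := fun _ _ ↦ continuousOn_const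
        norm_le := fun _ _ x _ ↦ hM x
        mul_max_le := by simp [hT.le] }
    obtain ⟨α, hα0, hα⟩ := hPL.exists_eq_forall_mem_Icc_hasDerivWithinAt₀
    exact ⟨α, hα0, fun t ht ↦
      (hα t (Ioo_subset_Icc_self ht)).hasDerivAt (Icc_mem_nhds ht.1 ht.2)⟩
  choose! α hα0 hα using hloc
  have heq {S T : ℝ} (hS : 0 < S) (hST : S ≤ T) : EqOn (α S) (α T) (Ioo (-S) S) :=
    ODE_solution_unique_of_mem_Ioo (v := fun _ ↦ f) (s := fun _ ↦ univ) (t₀ := 0)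
      (fun _ _ ↦ hf.lipschitzOnWith) ⟨by linarith, hS⟩
      (fun t ht ↦ ⟨hα S hS t ht, mem_univ _⟩)
      (fun t ht ↦ ⟨hα T (hS.trans_le hST) t ⟨by linarith [ht.1], by linarith [ht.2]⟩, mem_univ _⟩)
      (by rw [hα0 S hS, hα0 T (hS.trans_le hST)])
  have hval {t T : ℝ} (ht : |t| + 1 ≤ T) : α (|t| + 1) t = α T t :=
    heq (by positivity) ht (abs_lt.mp (lt_add_one _))
  refine ⟨fun t ↦ α (|t| + 1) t, by simpa using hα0 1 one_pos, fun t ↦ ?_⟩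
  have hpos : 0 < |t| + 2 := by positivity
  have hd := hα (|t| + 2) hpos t (abs_lt.mp (by linarith))
  rw [← hval (by linarith)] at hd
  refine hd.congr_of_eventuallyEq ?_
  filter_upwards [continuous_abs.continuousAt.eventually_lt (g := fun _ ↦ |t| + 1)
    continuousAt_const (lt_add_one |t|)] with s hs
  exact hval (by linarith)

/-- A `C¹` vector field that admits a differentiable function with bounded sublevel sets which is
nonincreasing in the direction of the field has integral curves defined for all positive times. -/
theorem ContDiff.exists_forall_hasDerivWithinAt_Ici_of_lyapunov {E : Type*}
    [NormedAddCommGroup E] [NormedSpace ℝ E] [FiniteDimensional ℝ E] {f : E → E}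
    (hf : ContDiff ℝ 1 f) {V : E → ℝ} {V' : E → E →L[ℝ] ℝ} (hV : ∀ x, HasFDerivAt V (V' x) x)
    (hVf : ∀ x, V' x (f x) ≤ 0) (hVb : ∀ c, Bornology.IsBounded {x | V x ≤ c}) (x₀ : E) :
    ∃ α : ℝ → E, α 0 = x₀ ∧ ∀ t ∈ Ici (0 : ℝ), HasDerivWithinAt α (f (α t)) (Ici 0) t := by
  have : CompleteSpace E := FiniteDimensional.complete ℝ E
  obtain ⟨R, hR0, hR⟩ := (hVb (V x₀)).subset_closedBall_lt 0 0
  let χ : ContDiffBump (0 : E) := ⟨R, R + 1, hR0, by linarith⟩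
  let g : E → E := fun x ↦ χ x • f x
  have hg : ContDiff ℝ 1 g := χ.contDiff.smul hf
  have hgc : HasCompactSupport g := χ.hasCompactSupport.smul_right
  obtain ⟨K, hK⟩ := hg.lipschitzWith_of_hasCompactSupport hgc one_ne_zero
  obtain ⟨M, hM⟩ := hgc.exists_bound_of_continuous hg.continuous
  obtain ⟨α, hα0, hα⟩ := hK.exists_forall_hasDerivAt_of_norm_le (M := M.toNNReal)
    (fun x ↦ (hM x).trans (Real.le_coe_toNNReal M)) x₀
  have hVα (t : ℝ) : HasDerivAt (V ∘ α) (V' (α t) (g (α t))) t :=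
    (hV (α t)).comp_hasDerivAt t (hα t)
  have hanti : Antitone (V ∘ α) := by
    refine antitone_of_hasDerivAt_nonpos hVα fun t ↦ ?_
    simpa [g] using mul_nonpos_of_nonneg_of_nonpos χ.nonneg (hVf (α t))
  refine ⟨α, hα0, fun t ht ↦ ?_⟩
  have hmem : α t ∈ Metric.closedBall 0 R := hR (by simpa [hα0] using hanti ht)
  have hgf : g (α t) = f (α t) := by simp [g, χ.one_of_mem_closedBall hmem]
  exact hgf ▸ (hα t).hasDerivWithinAt

section

variable {n : Type*} [Fintype n]

theorem Matrix.frobenius_norm_sq_eq_re_trace (A : Matrix n n ℂ) :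
    ‖A‖ ^ 2 = (Aᴴ * A).trace.re := by
  have h : 0 ≤ ∑ i, ∑ j, ‖A i j‖ ^ 2 := by positivity
  rw [frobenius_norm_def, ← Real.sqrt_eq_rpow]
  simp only [Real.rpow_ofNat]
  rw [Real.sq_sqrt h, Finset.sum_comm]
  simp [trace, mul_apply, Complex.sq_norm, Complex.normSq_apply]

theorem Matrix.re_trace_conjTranspose_mul_mul_commutator_nonpos (A : Matrix n n ℂ) :
    (Aᴴ * (A * (A * Aᴴ - Aᴴ * A))).trace.re ≤ 0 := by
  have h : ‖A * Aᴴ - Aᴴ * A‖ ^ 2 = -2 * (Aᴴ * (A * (A * Aᴴ - Aᴴ * A))).trace.re := by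
    rw [frobenius_norm_sq_eq_re_trace]
    have h1 : (A * (Aᴴ * (A * Aᴴ))).trace = (Aᴴ * (A * (Aᴴ * A))).trace := by
      rw [trace_mul_comm]; simp only [Matrix.mul_assoc]
    have h2 : (A * (Aᴴ * (Aᴴ * A))).trace = (Aᴴ * (A * (A * Aᴴ))).trace := by
      rw [← Matrix.mul_assoc, trace_mul_comm]; simp only [Matrix.mul_assoc]
    simp only [conjTranspose_sub, conjTranspose_mul, conjTranspose_conjTranspose,
      Matrix.mul_sub, Matrix.sub_mul, Matrix.mul_assoc, trace_sub, Complex.sub_re, h1, h2]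
    ring
  nlinarith [sq_nonneg ‖A * Aᴴ - Aᴴ * A‖]

end

attribute [local instance] Matrix.frobeniusNormedRing Matrix.frobeniusNormedAlgebra

theorem Matrix.contDiff_mul_commutator_conjTranspose {n : Type*} [Fintype n] [DecidableEq n] :
    ContDiff ℝ 1 fun A : Matrix n n ℂ ↦ A * (A * Aᴴ - Aᴴ * A) := by
  have h : ContDiff ℝ 1 fun A : Matrix n n ℂ ↦ Aᴴ :=
    (conjTransposeLinearEquiv n n ℝ ℂ).toLinearMap.toContinuousLinearMap.contDiff
  exact contDiff_id.mul ((contDiff_id.mul h).sub (h.mul contDiff_id))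

theorem Matrix.hasFDerivAt_frobenius_norm_sq {n : Type*} [Fintype n] [DecidableEq n]
    (A : Matrix n n ℂ) :
    ∃ L : Matrix n n ℂ →L[ℝ] ℝ, HasFDerivAt (fun B : Matrix n n ℂ ↦ ‖B‖ ^ 2) L A ∧
      ∀ H, L H = 2 * (Aᴴ * H).trace.re := by
  let S : Matrix n n ℂ →L[ℝ] Matrix n n ℂ :=
    (conjTransposeLinearEquiv n n ℝ ℂ).toLinearMap.toContinuousLinearMap
  let τ : Matrix n n ℂ →L[ℝ] ℝ :=
    (Complex.reLm ∘ₗ traceLinearMap n ℝ ℂ).toContinuousLinearMap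
  have hmul := (S.hasFDerivAt (x := A)).mul' (hasFDerivAt_id A)
  refine ⟨_, (HasFDerivAt.comp A (g := τ) τ.hasFDerivAt hmul).congr_of_eventuallyEq
    (.of_forall frobenius_norm_sq_eq_re_trace), fun H ↦ ?_⟩
  have h : (Hᴴ * A).trace.re = (Aᴴ * H).trace.re := by
    rw [← conjTranspose_conjTranspose (Hᴴ * A), trace_conjTranspose]
    simp
  change (Aᴴ * H + Hᴴ * A).trace.re = _
  rw [trace_add, Complex.add_re, h, two_mul]

theorem stmt8 {n : ℕ} (A₀ : Matrix (Fin n) (Fin n) ℂ) :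
    ∃ A : ℝ → Matrix (Fin n) (Fin n) ℂ, A 0 = A₀ ∧
      ∀ t ∈ Ici (0 : ℝ),
        HasDerivWithinAt A (A t * (A t * (A t)ᴴ - (A t)ᴴ * A t)) (Ici 0) t := by
  choose V' hV hV' using hasFDerivAt_frobenius_norm_sq (n := Fin n)
  refine contDiff_mul_commutator_conjTranspose.exists_forall_hasDerivWithinAt_Ici_of_lyapunov
    hV (fun A ↦ ?_) (fun c ↦ ?_) A₀
  · refine (hV' A _).trans_le ?_
    linarith [re_trace_conjTranspose_mul_mul_commutator_nonpos A]
  · refine (Metric.isBounded_closedBall (x := 0) (r := √c)).subset fun A hA ↦ ?_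
    simpa using Real.le_sqrt_of_sq_le hA
end

section
/- Let B₁ be a complex k×m matrix and B₂ a complex m×m matrix such that no nonzero vector v ∈ ℂ^m satisfies both B₁v = 0 and B₂v = 0, and let B ∈ M_{k+m}(ℂ) be the block matrix with blocks ((0, B₁), (0, B₂)). Then B·[B, B*] = −B if and only if B₁B₂* = 0 and B₁*B₁ − [B₂, B₂*] = Id_m. -/
/-!
STATEMENT 12: Let B₁ ∈ M_{k×m}(ℂ), B₂ ∈ M_m(ℂ) with ker B₁ ∩ ker B₂ = 0, and
B = ((0,B₁),(0,B₂)) the block matrix. Then B[B,B*] = −B iff B₁B₂* = 0 and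
B₁*B₁ − [B₂,B₂*] = Id.
-/

open Matrix

/-- If two matrices have trivial common kernel, a matrix annihilated by both on the left is zero. -/
theorem Matrix.eq_zero_of_mul_eq_zero_of_ker_inf {R k l m n : Type*} [Fintype m] [Semiring R]
    {A : Matrix k m R} {B : Matrix l m R}
    (hker : ∀ v : m → R, A *ᵥ v = 0 → B *ᵥ v = 0 → v = 0)
    {X : Matrix m n R} (hA : A * X = 0) (hB : B * X = 0) : X = 0 := by
  ext i j
  exact congrFun (hker (fun i => X i j) (funext fun a => congrFun (congrFun hA a) j)
    (funext fun a => congrFun (congrFun hB a) j)) i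

theorem stmt12 {k m : ℕ} (B₁ : Matrix (Fin k) (Fin m) ℂ) (B₂ : Matrix (Fin m) (Fin m) ℂ)
    (hker : ∀ v : Fin m → ℂ, B₁.mulVec v = 0 → B₂.mulVec v = 0 → v = 0)
    (B : Matrix (Fin k ⊕ Fin m) (Fin k ⊕ Fin m) ℂ)
    (hB : B = Matrix.fromBlocks 0 B₁ 0 B₂) :
    B * (B * Bᴴ - Bᴴ * B) = -B ↔
      B₁ * B₂ᴴ = 0 ∧ B₁ᴴ * B₁ - (B₂ * B₂ᴴ - B₂ᴴ * B₂) = 1 := by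
  have hD : B₁ᴴ * B₁ - (B₂ * B₂ᴴ - B₂ᴴ * B₂) = 1 ↔
      B₂ * B₂ᴴ - (B₁ᴴ * B₁ + B₂ᴴ * B₂) + 1 = 0 := by
    rw [← sub_eq_zero, ← neg_eq_zero]
    apply Eq.congr _ rfl
    abel
  have hadj : B₁ * B₂ᴴ = 0 ↔ B₂ * B₁ᴴ = 0 := by
    rw [← conjTranspose_eq_zero, conjTranspose_mul, conjTranspose_conjTranspose]
  have hblocks : B * (B * Bᴴ - Bᴴ * B) = -B ↔
      (B₁ * (B₂ * B₁ᴴ) = 0 ∧ B₂ * (B₂ * B₁ᴴ) = 0) ∧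
      B₁ * (B₂ * B₂ᴴ - (B₁ᴴ * B₁ + B₂ᴴ * B₂) + 1) = 0 ∧
      B₂ * (B₂ * B₂ᴴ - (B₁ᴴ * B₁ + B₂ᴴ * B₂) + 1) = 0 := by
    subst hB
    simp only [fromBlocks_conjTranspose, fromBlocks_multiply, sub_eq_add_neg, fromBlocks_add,
      fromBlocks_neg,
      fromBlocks_inj, conjTranspose_zero, Matrix.zero_mul, Matrix.mul_zero, zero_add, add_zero,
      neg_zero, Matrix.mul_add, Matrix.mul_one, add_eq_zero_iff_eq_neg]
    tauto
  rw [hblocks, hD, hadj]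
  constructor
  · rintro ⟨⟨h₁, h₂⟩, h₃, h₄⟩
    exact ⟨eq_zero_of_mul_eq_zero_of_ker_inf hker h₁ h₂,
      eq_zero_of_mul_eq_zero_of_ker_inf hker h₃ h₄⟩
  · rintro ⟨h₁, h₂⟩
    simp [h₁, h₂]
end

section
/- Let B, B' ∈ M_n(ℂ) be nilpotent matrices satisfying B·[B,B*] = −B and B'·[B',B'*] = −B'. If B' = gBg⁻¹ for some invertible g ∈ M_n(ℂ), then there exists a unitary U ∈ M_n(ℂ) with B' = UBU*. (Nilpotent almost-abelian HCF⁺ solitons are unique up to unitary equivalence within a similarity class.) -/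
/-!
STATEMENT 14: Nilpotent B, B' ∈ M_n(ℂ) with B[B,B*] = −B and B'[B',B'*] = −B' that are
similar (B' = gBg⁻¹, g invertible) are unitarily equivalent: B' = UBU* for some unitary U.
-/

open Matrix

open scoped ComplexOrder in
/-- A spanning family and a second family with the same Gram matrix differ by a unitary matrix. -/
lemma exists_unitary_of_gram_eq {m κ : Type*} [Fintype m] [DecidableEq m] [Fintype κ]
    [DecidableEq κ] {F F' : Matrix m κ ℂ} (hgram : Fᴴ * F = F'ᴴ * F')
    (hspan : ∀ y, Fᴴ *ᵥ y = 0 → y = 0) :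
    ∃ U : Matrix m m ℂ, U * Uᴴ = 1 ∧ U * F = F' := by
  have hunit : IsUnit (F * Fᴴ) := by
    rw [← Matrix.mulVec_injective_iff_isUnit]
    refine (injective_iff_map_eq_zero (F * Fᴴ).mulVecLin).2 fun y hy => hspan y ?_
    exact (Matrix.self_mul_conjTranspose_mulVec_eq_zero F y).1 hy
  obtain ⟨G, hFG⟩ : ∃ G : Matrix κ m ℂ, F * G = 1 :=
    ⟨Fᴴ * (F * Fᴴ)⁻¹, by
      rw [← Matrix.mul_assoc, Matrix.mul_nonsing_inv _ ((Matrix.isUnit_iff_isUnit_det _).1 hunit)]⟩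
  refine ⟨F' * G, ?_, ?_⟩
  · rw [mul_eq_one_comm, Matrix.conjTranspose_mul]
    calc Gᴴ * F'ᴴ * (F' * G) = Gᴴ * (F'ᴴ * F') * G := by simp only [Matrix.mul_assoc]
      _ = (F * G)ᴴ * (F * G) := by
          rw [← hgram, Matrix.conjTranspose_mul]; simp only [Matrix.mul_assoc]
      _ = 1 := by simp [hFG]
  · have hzero : F' * (G * F - 1) = 0 := by
      rw [← Matrix.conjTranspose_mul_self_mul_eq_zero, ← hgram, Matrix.mul_assoc,
        Matrix.mul_sub, ← Matrix.mul_assoc F, hFG]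
      simp
    rwa [Matrix.mul_sub, Matrix.mul_one, sub_eq_zero, ← Matrix.mul_assoc] at hzero

section Soliton

variable {m ι : Type*} [Fintype m] {B B' : Matrix m m ℂ}

lemma soliton_comm (hB : B * (B * Bᴴ - Bᴴ * B) = -B) :
    (B * Bᴴ) * B = B * (B * Bᴴ) + B := by
  rw [Matrix.mul_sub, sub_eq_iff_eq_add] at hB
  rw [Matrix.mul_assoc, hB]
  abel

variable [DecidableEq m]

lemma soliton_comm_pow (hB : B * (B * Bᴴ - Bᴴ * B) = -B) (k : ℕ) :
    (B * Bᴴ) * B ^ k = B ^ k * (B * Bᴴ) + (k : ℂ) • B ^ k := by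
  induction k with
  | zero => simp
  | succ k ih =>
    rw [pow_succ, ← mul_assoc, ih, add_mul, mul_assoc (B ^ k) (B * Bᴴ), soliton_comm hB,
      mul_add, smul_mul_assoc, mul_assoc (B ^ k) B (B * Bᴴ)]
    push_cast
    rw [add_smul, one_smul]
    abel

lemma soliton_comm_conjTranspose_pow (hB : B * (B * Bᴴ - Bᴴ * B) = -B) (k : ℕ) :
    Bᴴ ^ k * (B * Bᴴ) = (B * Bᴴ) * Bᴴ ^ k + (k : ℂ) • Bᴴ ^ k := by
  simpa [Matrix.conjTranspose_mul, Matrix.conjTranspose_pow] using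
    congrArg Matrix.conjTranspose (soliton_comm_pow hB k)

/-- Functionals separating the points of `ker B` detect every `B`-nilpotent vector along its orbit. -/
lemma eq_zero_of_forall_pow_mulVec {N : ℕ} {X : Matrix m ι ℂ}
    (hker : ∀ y, B *ᵥ y = 0 → Xᴴ *ᵥ y = 0 → y = 0) {y : m → ℂ} (hN : B ^ N *ᵥ y = 0)
    (hy : ∀ j < N, Xᴴ *ᵥ (B ^ j *ᵥ y) = 0) : y = 0 := by
  induction N with
  | zero => simpa using hN
  | succ N ih =>
    refine ih (hker _ ?_ (hy N N.lt_succ_self)) fun j hj => hy j (hj.trans N.lt_succ_self)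
    rwa [Matrix.mulVec_mulVec, ← pow_succ']

variable [Fintype ι] [DecidableEq ι]

lemma soliton_lower (hB : B * (B * Bᴴ - Bᴴ * B) = -B) {X : Matrix m ι ℂ} {L : Matrix ι ι ℂ}
    (hX : B * Bᴴ * X = X * L) (j : ℕ) :
    B * (Bᴴ ^ (j + 1) * X) = Bᴴ ^ j * X * (L - (j : ℂ) • 1) := by
  have h := soliton_comm_conjTranspose_pow hB j
  rw [← sub_eq_iff_eq_add] at h
  rw [pow_succ', ← Matrix.mul_assoc, ← Matrix.mul_assoc, ← h, Matrix.sub_mul, Matrix.mul_assoc,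
    hX, Matrix.mul_sub]
  simp [Matrix.mul_assoc]

lemma soliton_gram_eq (hB : B * (B * Bᴴ - Bᴴ * B) = -B)
    (hB' : B' * (B' * B'ᴴ - B'ᴴ * B') = -B') {X X' : Matrix m ι ℂ} {L : Matrix ι ι ℂ}
    (hX : B * Bᴴ * X = X * L) (hX' : B' * B'ᴴ * X' = X' * L)
    (hBX : B * X = 0) (hBX' : B' * X' = 0) (hXX : Xᴴ * X = X'ᴴ * X') (i j : ℕ) :
    (Bᴴ ^ i * X)ᴴ * (Bᴴ ^ j * X) = (B'ᴴ ^ i * X')ᴴ * (B'ᴴ ^ j * X') := by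
  have raise : ∀ (C : Matrix m m ℂ) (Y : Matrix m ι ℂ) (i : ℕ),
      (Cᴴ ^ (i + 1) * Y)ᴴ = (Cᴴ ^ i * Y)ᴴ * C := fun C Y i => by
    simp [pow_succ', Matrix.conjTranspose_mul, Matrix.mul_assoc]
  have kill : ∀ (C : Matrix m m ℂ) (Y : Matrix m ι ℂ) (j : ℕ), C * Y = 0 →
      Yᴴ * (Cᴴ ^ (j + 1) * Y) = 0 := fun C Y j h => by
    rw [pow_succ', Matrix.mul_assoc, ← Matrix.mul_assoc, ← Matrix.conjTranspose_mul, h]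
    simp
  induction i generalizing j with
  | zero =>
    cases j with
    | zero => simpa using hXX
    | succ j => simp only [pow_zero, Matrix.one_mul, kill _ _ _ hBX, kill _ _ _ hBX']
  | succ i ih =>
    rw [raise, raise, Matrix.mul_assoc, Matrix.mul_assoc]
    cases j with
    | zero => simp [hBX, hBX']
    | succ j =>
      rw [soliton_lower hB hX, soliton_lower hB' hX', ← Matrix.mul_assoc, ih, Matrix.mul_assoc]

lemma exists_unitary_of_ker_frames {N : ℕ} (hN : B ^ N = 0) (hN' : B' ^ N = 0)
    (hB : B * (B * Bᴴ - Bᴴ * B) = -B)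
    (hB' : B' * (B' * B'ᴴ - B'ᴴ * B') = -B') {X X' : Matrix m ι ℂ} {L : Matrix ι ι ℂ}
    (hX : B * Bᴴ * X = X * L) (hX' : B' * B'ᴴ * X' = X' * L)
    (hBX : B * X = 0) (hBX' : B' * X' = 0) (hXX : Xᴴ * X = X'ᴴ * X')
    (hker : ∀ y, B *ᵥ y = 0 → Xᴴ *ᵥ y = 0 → y = 0) :
    ∃ U : Matrix m m ℂ, U * Uᴴ = 1 ∧ B' = U * B * Uᴴ := by
  let orbit (C : Matrix m m ℂ) (Y : Matrix m ι ℂ) : Matrix m (Fin N × ι) ℂ :=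
    Matrix.of fun a p => (Cᴴ ^ (p.1 : ℕ) * Y) a p.2
  have hspan : ∀ y, (orbit B X)ᴴ *ᵥ y = 0 → y = 0 := fun y hy => by
    refine eq_zero_of_forall_pow_mulVec (N := N) hker (by simp [hN]) fun j hj => ?_
    have h : Xᴴ * B ^ j = (Bᴴ ^ j * X)ᴴ := by
      simp [Matrix.conjTranspose_mul, Matrix.conjTranspose_pow]
    rw [Matrix.mulVec_mulVec, h]
    funext i
    exact congrFun hy (⟨j, hj⟩, i)
  have hgram : (orbit B X)ᴴ * orbit B X = (orbit B' X')ᴴ * orbit B' X' := by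
    ext p q
    exact congrFun (congrFun
      (soliton_gram_eq hB hB' hX hX' hBX hBX' hXX (p.1 : ℕ) (q.1 : ℕ)) p.2) q.2
  obtain ⟨U, hU, hUF⟩ := exists_unitary_of_gram_eq hgram hspan
  have hpow : ∀ j, U * (Bᴴ ^ j * X) = B'ᴴ ^ j * X' := fun j => by
    rcases lt_or_ge j N with hj | hj
    · ext a i
      exact congrFun (congrFun hUF a) (⟨j, hj⟩, i)
    · rw [← Matrix.conjTranspose_pow, ← Matrix.conjTranspose_pow, pow_eq_zero_of_le hj hN,
        pow_eq_zero_of_le hj hN']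
      simp
  have hzero : (U * Bᴴ - B'ᴴ * U) * orbit B X = 0 := by
    ext a p
    have h : (U * Bᴴ - B'ᴴ * U) * (Bᴴ ^ (p.1 : ℕ) * X) = 0 := by
      rw [Matrix.sub_mul, Matrix.mul_assoc B'ᴴ, hpow, Matrix.mul_assoc U, ← Matrix.mul_assoc Bᴴ,
        ← pow_succ', hpow, pow_succ', Matrix.mul_assoc, sub_self]
    exact congrFun (congrFun h a) p.2
  have hint : U * Bᴴ = B'ᴴ * U := by
    rw [← sub_eq_zero, ← Matrix.conjTranspose_eq_zero]
    refine Matrix.ext_of_mulVec_single fun i => ?_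
    rw [Matrix.zero_mulVec]
    refine hspan _ ?_
    rw [Matrix.mulVec_mulVec, ← Matrix.conjTranspose_mul, hzero, Matrix.conjTranspose_zero,
      Matrix.zero_mulVec]
  refine ⟨U, hU, ?_⟩
  have h : B'ᴴ = U * Bᴴ * Uᴴ := by rw [hint, Matrix.mul_assoc, hU, Matrix.mul_one]
  simpa [Matrix.conjTranspose_mul, Matrix.mul_assoc] using congrArg Matrix.conjTranspose h

end Soliton

section Filtration

variable {n : ℕ} {B : Matrix (Fin n) (Fin n) ℂ}

/-- The part of the kernel of `B` that lies in the range of `B ^ k`. -/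
noncomputable def kerRange (B : Matrix (Fin n) (Fin n) ℂ) (k : ℕ) :
    Submodule ℂ (EuclideanSpace ℂ (Fin n)) :=
  LinearMap.ker (Matrix.toEuclideanLin B) ⊓ LinearMap.range (Matrix.toEuclideanLin (B ^ k))

/-- The orthogonal complement of `kerRange B (k + 1)` in `kerRange B k`. -/
noncomputable def kerGraded (B : Matrix (Fin n) (Fin n) ℂ) (k : ℕ) :
    Submodule ℂ (EuclideanSpace ℂ (Fin n)) :=
  (kerRange B (k + 1))ᗮ ⊓ kerRange B k

lemma mem_kerRange {k : ℕ} {x : EuclideanSpace ℂ (Fin n)} :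
    x ∈ kerRange B k ↔ B *ᵥ x.ofLp = 0 ∧ ∃ y, B ^ k *ᵥ y = x.ofLp := by
  simp only [kerRange, Submodule.mem_inf, LinearMap.mem_ker, LinearMap.mem_range,
    Matrix.toLpLin_apply, WithLp.toLp_eq_zero]
  refine and_congr_right fun _ => ⟨fun ⟨y, hy⟩ => ⟨y.ofLp, by rw [← hy]⟩, fun ⟨y, hy⟩ =>
    ⟨WithLp.toLp 2 y, by rw [hy]⟩⟩

lemma kerRange_antitone : Antitone (kerRange B) := by
  refine antitone_nat_of_succ_le fun k x hx => ?_
  rw [mem_kerRange] at hx ⊢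
  obtain ⟨h, y, hy⟩ := hx
  exact ⟨h, B *ᵥ y, by rw [Matrix.mulVec_mulVec, ← pow_succ, hy]⟩

lemma finrank_kerRange_le_conj {g : Matrix (Fin n) (Fin n) ℂ} (hg : IsUnit g) (k : ℕ) :
    Module.finrank ℂ (kerRange B k) ≤ Module.finrank ℂ (kerRange (g * B * g⁻¹) k) := by
  have hdet := (Matrix.isUnit_iff_isUnit_det g).1 hg
  have hpow : (g * B * g⁻¹) ^ k * g = g * B ^ k := by
    have h : SemiconjBy g B (g * B * g⁻¹) := by
      rw [SemiconjBy, mul_assoc (g * B), Matrix.nonsing_inv_mul _ hdet, mul_one]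
    exact (h.pow_right k).eq.symm
  have hmaps : ∀ x ∈ kerRange B k, Matrix.toEuclideanLin g x ∈ kerRange (g * B * g⁻¹) k := by
    intro x hx
    rw [mem_kerRange] at hx ⊢
    obtain ⟨h, y, hy⟩ := hx
    rw [Matrix.toLpLin_apply]
    refine ⟨?_, g *ᵥ y, ?_⟩
    · rw [Matrix.mulVec_mulVec, Matrix.mul_assoc (g * B), Matrix.nonsing_inv_mul _ hdet,
        Matrix.mul_one, ← Matrix.mulVec_mulVec, h, Matrix.mulVec_zero]
    · rw [Matrix.mulVec_mulVec, hpow, ← Matrix.mulVec_mulVec, hy]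
  refine LinearMap.finrank_le_finrank_of_injective
    (f := (Matrix.toEuclideanLin g).restrict hmaps) fun x y hxy => Subtype.ext ?_
  have h := congrArg (fun z => (Subtype.val z).ofLp) hxy
  exact WithLp.ofLp_injective 2 (Matrix.mulVec_injective_of_isUnit hg h)

lemma finrank_kerRange_conj {g : Matrix (Fin n) (Fin n) ℂ} (hg : IsUnit g) (k : ℕ) :
    Module.finrank ℂ (kerRange (g * B * g⁻¹) k) = Module.finrank ℂ (kerRange B k) := by
  have hdet := (Matrix.isUnit_iff_isUnit_det g).1 hg
  refine le_antisymm ?_ (finrank_kerRange_le_conj hg k)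
  have h : g⁻¹ * (g * B * g⁻¹) * g⁻¹⁻¹ = B := by
    rw [Matrix.nonsing_inv_nonsing_inv _ hdet, Matrix.mul_assoc g, ← Matrix.mul_assoc,
      Matrix.nonsing_inv_mul _ hdet, Matrix.one_mul, Matrix.mul_assoc,
      Matrix.nonsing_inv_mul _ hdet, Matrix.mul_one]
  have hle := finrank_kerRange_le_conj (B := g * B * g⁻¹) (Matrix.isUnit_nonsing_inv_iff.2 hg) k
  rwa [h] at hle

lemma finrank_kerGraded_conj {g : Matrix (Fin n) (Fin n) ℂ} (hg : IsUnit g) (k : ℕ) :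
    Module.finrank ℂ (kerGraded (g * B * g⁻¹) k) = Module.finrank ℂ (kerGraded B k) := by
  have h (C : Matrix (Fin n) (Fin n) ℂ) :=
    Submodule.finrank_add_inf_finrank_orthogonal (kerRange_antitone (B := C) (Nat.le_succ k))
  have h₁ := h B
  have h₂ := h (g * B * g⁻¹)
  rw [finrank_kerRange_conj hg, finrank_kerRange_conj hg] at h₂
  unfold kerGraded
  exact Nat.add_left_cancel (h₂.trans h₁.symm)

lemma mulVec_of_mem_kerGraded (hB : B * (B * Bᴴ - Bᴴ * B) = -B) {k : ℕ}
    {x : EuclideanSpace ℂ (Fin n)} (hx : x ∈ kerGraded B k) :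
    (B * Bᴴ) *ᵥ x.ofLp = (k : ℂ) • x.ofLp := by
  have hinv : ∀ l, ∀ z ∈ kerRange B l, Matrix.toEuclideanLin (B * Bᴴ) z ∈ kerRange B l := by
    intro l z hz
    rw [mem_kerRange] at hz ⊢
    obtain ⟨h, y, hy⟩ := hz
    rw [Matrix.toLpLin_apply]
    constructor
    · have hcomm := soliton_comm hB
      rw [← sub_eq_iff_eq_add] at hcomm
      rw [Matrix.mulVec_mulVec, ← hcomm, Matrix.sub_mulVec, ← Matrix.mulVec_mulVec, h]
      simp
    · refine ⟨(B * Bᴴ) *ᵥ y + (l : ℂ) • y, ?_⟩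
      rw [← hy, Matrix.mulVec_mulVec, soliton_comm_pow hB, Matrix.mulVec_add, Matrix.add_mulVec,
        Matrix.mulVec_mulVec, Matrix.mulVec_smul, Matrix.smul_mulVec]
  obtain ⟨hperp, hmem⟩ := Submodule.mem_inf.1 hx
  have hsymm : (Matrix.toEuclideanLin (B * Bᴴ)).IsSymmetric :=
    Matrix.isSymmetric_toEuclideanLin_iff.2 (Matrix.isHermitian_mul_conjTranspose_self B)
  have hdiff : Matrix.toEuclideanLin (B * Bᴴ) x - (k : ℂ) • x ∈ kerRange B (k + 1) := by
    have h := (mem_kerRange.1 (sub_mem (hinv k x hmem) (Submodule.smul_mem _ (k : ℂ) hmem))).1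
    refine mem_kerRange.2 ⟨h, ?_⟩
    obtain ⟨-, y, hy⟩ := mem_kerRange.1 hmem
    refine ⟨Bᴴ *ᵥ y, ?_⟩
    rw [Matrix.toLpLin_apply, WithLp.ofLp_sub, WithLp.ofLp_smul, ← hy,
      Matrix.mulVec_mulVec, Matrix.mulVec_mulVec, soliton_comm_pow hB, Matrix.add_mulVec,
      Matrix.smul_mulVec, add_sub_cancel_right, pow_succ, Matrix.mul_assoc]
  have hdiff' : Matrix.toEuclideanLin (B * Bᴴ) x - (k : ℂ) • x ∈ (kerRange B (k + 1))ᗮ := by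
    refine sub_mem ((Submodule.mem_orthogonal _ _).2 fun z hz => ?_)
      (Submodule.smul_mem _ _ hperp)
    rw [← hsymm]
    exact (Submodule.mem_orthogonal _ _).1 hperp _ (hinv _ z hz)
  have h0 := (Submodule.mem_bot ℂ).1
    (Submodule.inf_orthogonal_eq_bot (kerRange B (k + 1)) ▸ Submodule.mem_inf.2 ⟨hdiff, hdiff'⟩)
  exact congrArg WithLp.ofLp (sub_eq_zero.1 h0)

lemma eq_zero_of_orthogonal_kerGraded {N : ℕ} (hN : B ^ N = 0) {y : EuclideanSpace ℂ (Fin n)}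
    (hy : B *ᵥ y.ofLp = 0) (horth : ∀ k < N, ∀ x ∈ kerGraded B k, inner ℂ x y = 0) : y = 0 := by
  have hmem : ∀ k ≤ N, y ∈ kerRange B k := by
    intro k hk
    induction k with
    | zero => exact mem_kerRange.2 ⟨hy, y.ofLp, by simp⟩
    | succ k ih =>
      have hsup := Submodule.sup_orthogonal_inf_of_hasOrthogonalProjection
        (kerRange_antitone (B := B) (Nat.le_succ k))
      obtain ⟨a, ha, b, hb, rfl⟩ := Submodule.mem_sup.1 (hsup.symm ▸ ih (Nat.le_of_succ_le hk))
      have hab : inner ℂ b a = 0 :=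
        (Submodule.mem_orthogonal' _ _).1 (Submodule.mem_inf.1 hb).1 a ha
      have hb0 := horth k hk b hb
      rw [inner_add_right, hab, zero_add, inner_self_eq_zero] at hb0
      rwa [hb0, add_zero]
  obtain ⟨-, z, hz⟩ := mem_kerRange.1 (hmem N le_rfl)
  rw [hN, Matrix.zero_mulVec] at hz
  exact (WithLp.ofLp_eq_zero 2).1 hz.symm

lemma exists_ker_frame {N : ℕ} (hN : B ^ N = 0) (hB : B * (B * Bᴴ - Bᴴ * B) = -B)
    {d : ℕ → ℕ} (hd : ∀ k, Module.finrank ℂ (kerGraded B k) = d k) :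
    ∃ X : Matrix (Fin n) (Σ k : Fin N, Fin (d k)) ℂ,
      B * Bᴴ * X = X * (Matrix.diagonal fun p => ((p.1 : ℕ) : ℂ) :
        Matrix (Σ k : Fin N, Fin (d k)) (Σ k : Fin N, Fin (d k)) ℂ) ∧
      B * X = 0 ∧ Xᴴ * X = 1 ∧
      ∀ y, B *ᵥ y = 0 → Xᴴ *ᵥ y = 0 → y = 0 := by
  let e (k : ℕ) : OrthonormalBasis (Fin (d k)) ℂ (kerGraded B k) :=
    (stdOrthonormalBasis ℂ (kerGraded B k)).reindex (finCongr (hd k))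
  let X : Matrix (Fin n) (Σ k : Fin N, Fin (d k)) ℂ :=
    Matrix.of fun a p => (e p.1 p.2 : EuclideanSpace ℂ (Fin n)) a
  have hcol : ∀ p, X *ᵥ Pi.single p 1 = (e p.1 p.2 : EuclideanSpace ℂ (Fin n)).ofLp := by
    intro p
    rw [Matrix.mulVec_single_one]
    rfl
  have hinner : ∀ p (y : Fin n → ℂ), (Xᴴ *ᵥ y) p =
      inner ℂ (e p.1 p.2 : EuclideanSpace ℂ (Fin n)) (WithLp.toLp 2 y) := by
    intro p y
    simp [X, Matrix.mulVec, dotProduct, PiLp.inner_apply, mul_comm]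
  have horth : ∀ {k l : ℕ}, k < l → ∀ x ∈ kerGraded B k, ∀ y ∈ kerGraded B l,
      inner ℂ x y = 0 := fun hkl x hx y hy =>
    (Submodule.mem_orthogonal' _ _).1 (Submodule.mem_inf.1 hx).1 y
      (kerRange_antitone (Nat.succ_le_of_lt hkl) (Submodule.mem_inf.1 hy).2)
  refine ⟨X, ?_, ?_, ?_, ?_⟩
  · refine Matrix.ext_of_mulVec_single fun p => ?_
    rw [← Matrix.mulVec_mulVec, hcol, mulVec_of_mem_kerGraded hB (e p.1 p.2).2,
      ← Matrix.mulVec_mulVec, Matrix.diagonal_mulVec_single, mul_one, ← hcol,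
      ← Matrix.mulVec_smul, ← Pi.single_smul, smul_eq_mul, mul_one]
  · refine Matrix.ext_of_mulVec_single fun p => ?_
    rw [← Matrix.mulVec_mulVec, hcol, Matrix.zero_mulVec]
    exact (mem_kerRange.1 (Submodule.mem_inf.1 (e p.1 p.2).2).2).1
  · refine Matrix.ext_of_mulVec_single fun q => funext fun p => ?_
    rw [← Matrix.mulVec_mulVec, hcol, hinner, Matrix.one_mulVec, WithLp.toLp_ofLp]
    obtain ⟨k, i⟩ := p
    obtain ⟨l, j⟩ := q
    rcases lt_trichotomy k l with h | rfl | h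
    · rw [horth h _ (e k i).2 _ (e l j).2, Pi.single_eq_of_ne]
      exact fun hp => h.ne (congrArg Sigma.fst hp)
    · rw [← Submodule.coe_inner, (e k).inner_eq_ite, Pi.single_apply]
      simp
    · rw [inner_eq_zero_symm.1 (horth h _ (e l j).2 _ (e k i).2), Pi.single_eq_of_ne]
      exact fun hp => h.ne' (congrArg Sigma.fst hp)
  · intro y hy hXy
    refine (WithLp.toLp_eq_zero 2).1 (eq_zero_of_orthogonal_kerGraded hN hy fun k hk x hx => ?_)
    have hsum := congrArg Subtype.val ((e k).sum_repr ⟨x, hx⟩)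
    rw [← show _ = x from hsum, Submodule.coe_sum, sum_inner]
    refine Finset.sum_eq_zero fun i _ => ?_
    have h := hinner ⟨⟨k, hk⟩, i⟩ y
    rw [hXy, Pi.zero_apply] at h
    rw [Submodule.coe_smul, inner_smul_left, ← h, mul_zero]

end Filtration

theorem stmt14 {n : ℕ} {B B' g : Matrix (Fin n) (Fin n) ℂ}
    (hB : IsNilpotent B) (hB' : IsNilpotent B')
    (hsolB : B * (B * Bᴴ - Bᴴ * B) = -B)
    (hsolB' : B' * (B' * B'ᴴ - B'ᴴ * B') = -B')
    (hg : IsUnit g) (hconj : B' = g * B * g⁻¹) :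
    ∃ U : Matrix (Fin n) (Fin n) ℂ, U * Uᴴ = 1 ∧ B' = U * B * Uᴴ := by
  obtain ⟨N₁, hN₁⟩ := hB
  obtain ⟨N₂, hN₂⟩ := hB'
  have hN : B ^ (N₁ + N₂) = 0 := by rw [pow_add, hN₁, zero_mul]
  have hN' : B' ^ (N₁ + N₂) = 0 := by rw [pow_add, hN₂, mul_zero]
  obtain ⟨X, hX, hBX, hXX, hker⟩ := exists_ker_frame hN hsolB
    (d := fun k => Module.finrank ℂ (kerGraded B k)) (fun k => rfl)
  obtain ⟨X', hX', hBX', hXX', -⟩ := exists_ker_frame hN' hsolB'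
    (d := fun k => Module.finrank ℂ (kerGraded B k))
    (fun k => hconj ▸ finrank_kerGraded_conj hg k)
  exact exists_unitary_of_ker_frames hN hN' hsolB hsolB' hX hX' hBX hBX' (hXX.trans hXX'.symm) hker
end

section
/- For every nilpotent matrix A ∈ M_n(ℂ) there exists an invertible matrix g ∈ M_n(ℂ) such that B := gAg⁻¹ satisfies B·[B,B*] = −B. (Every complex almost-abelian Lie group with nilpotent defining matrix admits a left-invariant HCF⁺ soliton.) -/
/-!
STATEMENT 15: For every nilpotent A ∈ M_n(ℂ) there is an invertible g such that
B := gAg⁻¹ satisfies B[B,B*] = −B.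
-/

open Matrix

section
open Polynomial

/-- The powers of `X` below `k` form a basis of `K[X] ⧸ (X ^ k)`. -/
theorem Polynomial.exists_basis_quotient_X_pow (K : Type*) [Field K] (k : ℕ) :
    ∃ c : Module.Basis (Fin k) K (K[X] ⧸ K[X] ∙ (X : K[X]) ^ k),
      ∀ j, c j = Submodule.Quotient.mk (X ^ (j : ℕ)) := by
  let p := AdjoinRoot.powerBasis' (monic_X_pow (R := K) k)
  have hp (j : Fin k) : p.basis.reindex (finCongr (natDegree_X_pow k)) j =
      AdjoinRoot.mk (X ^ k) (X ^ (j : ℕ)) := by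
    rw [Module.Basis.reindex_apply, PowerBasis.basis_eq_pow]
    simp [p]
    rfl
  exact ⟨p.basis.reindex (finCongr (natDegree_X_pow k)), hp⟩

/-- A nilpotent endomorphism of a finite-dimensional space has a Jordan basis. -/
theorem IsNilpotent.exists_jordan_basis {K V : Type*} [Field K] [AddCommGroup V] [Module K V]
    [Module.Finite K V] {f : Module.End K V} (hf : IsNilpotent f) :
    ∃ (d : ℕ) (k : Fin d → ℕ) (b : Module.Basis (Σ i, Fin (k i)) K V),
      ∀ i (j : Fin (k i)), f (b ⟨i, j⟩) =
        if h : (j : ℕ) + 1 < k i then b ⟨i, ⟨j + 1, h⟩⟩ else 0 := by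
  obtain ⟨m, hm⟩ := hf
  have htors : Module.IsTorsion' (Module.AEval K V f) (Submonoid.powers (X : K[X])) := by
    intro x
    refine ⟨⟨X ^ m, Submonoid.mem_powers_iff _ _ |>.2 ⟨m, rfl⟩⟩,
      (Module.AEval.of K V f).symm.injective ?_⟩
    rw [Submonoid.mk_smul, Module.AEval.of_symm_smul]
    simp [hm]
  obtain ⟨d, k, ⟨e⟩⟩ :=
    Module.torsion_by_prime_power_decomposition (irreducible_X (R := K)) htors
  choose c hc using fun i => exists_basis_quotient_X_pow K (k i)
  let e' := e.trans (DirectSum.linearEquivFunOnFintype K[X] (Fin d) _)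
  refine ⟨d, k, (Pi.basis c).map
    ((Module.AEval.of K V f).trans (e'.restrictScalars K)).symm, fun i j => ?_⟩
  have hb (j : Fin (k i)) : (Pi.basis c).map
      ((Module.AEval.of K V f).trans (e'.restrictScalars K)).symm ⟨i, j⟩ =
      (Module.AEval.of K V f).symm
        (e'.symm (Pi.single i (Submodule.Quotient.mk (X ^ (j : ℕ))))) := by
    rw [Module.Basis.map_apply, Pi.basis_apply, hc]
    rfl
  have hX : f ((Module.AEval.of K V f).symm
        (e'.symm (Pi.single i (Submodule.Quotient.mk (X ^ (j : ℕ)))))) =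
      (Module.AEval.of K V f).symm
        (e'.symm (Pi.single i (Submodule.Quotient.mk (X ^ (j + 1 : ℕ))))) := by
    rw [← Module.End.smul_def, ← Module.AEval.of_symm_X_smul, ← map_smul, ← Pi.single_smul,
      ← Submodule.Quotient.mk_smul, smul_eq_mul, ← pow_succ']
  rw [hb, hX]
  split_ifs with h
  · rw [hb]
  · rw [show (j : ℕ) + 1 = k i by omega, (Submodule.Quotient.mk_eq_zero _).2
      (Submodule.mem_span_singleton_self _)]
    simp

end

/-- The block diagonal matrix with blocks of sizes `k i` whose only nonzero entries are
`√1, √2, …` on the subdiagonal of each block. -/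
noncomputable def sqrtJordan {d : ℕ} (k : Fin d → ℕ) :
    Matrix (Σ i, Fin (k i)) (Σ i, Fin (k i)) ℂ :=
  Matrix.of fun p q => if p.1 = q.1 ∧ (p.2 : ℕ) = q.2 + 1 then (Real.sqrt (p.2 : ℕ) : ℂ) else 0

theorem sqrtJordan_mul_conjTranspose {d : ℕ} (k : Fin d → ℕ) :
    sqrtJordan k * (sqrtJordan k)ᴴ = diagonal fun p => ((p.2 : ℕ) : ℂ) := by
  ext ⟨i, a⟩ ⟨i', b⟩
  have hsq : (Real.sqrt (a : ℕ) : ℂ) * Real.sqrt (a : ℕ) = (a : ℕ) := by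
    rw [← Complex.ofReal_mul, Real.mul_self_sqrt (Nat.cast_nonneg _), Complex.ofReal_natCast]
  simp only [sqrtJordan, mul_apply, conjTranspose_apply, of_apply, diagonal_apply]
  by_cases ha : (a : ℕ) = 0
  · simp [ha]
  rw [Finset.sum_eq_single ⟨i, ⟨a - 1, by omega⟩⟩]
  · by_cases h : (⟨i, a⟩ : Σ i, Fin (k i)) = ⟨i', b⟩
    · cases h
      rw [if_pos ⟨rfl, by simp; omega⟩, if_pos rfl]
      simpa using hsq
    · rw [if_neg h, if_neg (c := i' = i ∧ _), star_zero, mul_zero]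
      rintro ⟨rfl, h2⟩
      refine h ?_
      rw [show a = b from Fin.ext (by simp at h2; omega)]
  · rintro ⟨i₂, c⟩ - hne
    rw [if_neg, zero_mul]
    rintro ⟨h1, h2⟩
    dsimp only at h1 h2
    subst h1
    refine hne ?_
    rw [show c = ⟨a - 1, by omega⟩ from Fin.ext (by simp; omega)]
  · simp

theorem sqrtJordan_conjTranspose_mul {d : ℕ} (k : Fin d → ℕ) :
    (sqrtJordan k)ᴴ * sqrtJordan k =
      diagonal fun p => if (p.2 : ℕ) + 1 < k p.1 then ((p.2 : ℕ) + 1 : ℂ) else 0 := by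
  ext ⟨i, a⟩ ⟨i', b⟩
  have hsq : (Real.sqrt (a + 1 : ℕ) : ℂ) * Real.sqrt (a + 1 : ℕ) = (a : ℕ) + 1 := by
    rw [← Complex.ofReal_mul, Real.mul_self_sqrt (Nat.cast_nonneg _), Complex.ofReal_natCast]
    push_cast
    rfl
  simp only [sqrtJordan, mul_apply, conjTranspose_apply, of_apply, diagonal_apply]
  by_cases ha : (a : ℕ) + 1 < k i
  · rw [Finset.sum_eq_single ⟨i, ⟨a + 1, ha⟩⟩]
    · by_cases h : (⟨i, a⟩ : Σ i, Fin (k i)) = ⟨i', b⟩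
      · cases h
        rw [if_pos ⟨rfl, rfl⟩, if_pos rfl, if_pos ha]
        simpa using hsq
      · rw [if_neg h, if_neg (c := i = i' ∧ _), mul_zero]
        rintro ⟨rfl, h2⟩
        refine h ?_
        rw [show a = b from Fin.ext (by simp at h2; omega)]
    · rintro ⟨i₂, c⟩ - hne
      rw [if_neg, star_zero, zero_mul]
      rintro ⟨h1, h2⟩
      dsimp only at h1 h2
      subst h1
      exact hne (by rw [show c = ⟨a + 1, ha⟩ from Fin.ext h2])
    · simp
  · rw [if_neg ha, ite_self]
    refine Finset.sum_eq_zero ?_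
    rintro ⟨i₂, c⟩ -
    rw [if_neg, star_zero, zero_mul]
    rintro ⟨h1, h2⟩
    dsimp only at h1 h2
    subst h1
    omega

theorem sqrtJordan_mul_commutator {d : ℕ} (k : Fin d → ℕ) :
    sqrtJordan k * (sqrtJordan k * (sqrtJordan k)ᴴ - (sqrtJordan k)ᴴ * sqrtJordan k) =
      -sqrtJordan k := by
  rw [sqrtJordan_mul_conjTranspose, sqrtJordan_conjTranspose_mul, diagonal_sub]
  ext ⟨i, a⟩ ⟨i', b⟩
  rw [mul_diagonal]
  simp only [sqrtJordan, of_apply, Matrix.neg_apply]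
  split_ifs with h h'
  · ring
  · obtain ⟨rfl, h2⟩ := h
    exact absurd (h2 ▸ a.2) h'
  · simp
  · simp

/-- A nilpotent complex endomorphism is represented by `sqrtJordan k` in some basis. -/
theorem IsNilpotent.exists_toMatrix_eq_sqrtJordan {V : Type*} [AddCommGroup V] [Module ℂ V]
    [Module.Finite ℂ V] {f : Module.End ℂ V} (hf : IsNilpotent f) :
    ∃ (d : ℕ) (k : Fin d → ℕ) (b : Module.Basis (Σ i, Fin (k i)) ℂ V),
      LinearMap.toMatrix b b f = sqrtJordan k := by
  obtain ⟨d, k, b, hb⟩ := hf.exists_jordan_basis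
  have hs (j : ℕ) : (Real.sqrt (j.factorial : ℝ) : ℂ) ≠ 0 := by
    rw [Complex.ofReal_ne_zero, Real.sqrt_ne_zero (Nat.cast_nonneg _), Nat.cast_ne_zero]
    exact j.factorial_ne_zero
  let u (p : Σ i, Fin (k i)) : ℂˣ := (Units.mk0 _ (hs p.2))⁻¹
  refine ⟨d, k, b.unitsSMul u, ?_⟩
  ext ⟨i, a⟩ ⟨i', j⟩
  rw [LinearMap.toMatrix_apply, Module.Basis.unitsSMul_apply, Module.Basis.repr_unitsSMul]
  simp only [Units.smul_def, map_smul, hb, sqrtJordan, of_apply]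
  split_ifs with h h' h'
  · obtain ⟨rfl, h2⟩ := h'
    have hsqrt : (Real.sqrt ((a : ℕ).factorial : ℝ) : ℂ) =
        Real.sqrt (a : ℕ) * Real.sqrt ((j : ℕ).factorial : ℝ) := by
      rw [← Complex.ofReal_mul, ← Real.sqrt_mul (Nat.cast_nonneg _), h2, Nat.factorial_succ,
        Nat.cast_mul]
    rw [show (⟨j + 1, h⟩ : Fin (k i)) = a from Fin.ext h2.symm]
    simp [u, hsqrt, hs]
  · have : (⟨i', ⟨j + 1, h⟩⟩ : Σ i, Fin (k i)) ≠ ⟨i, a⟩ := by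
      intro h3
      cases h3
      exact h' ⟨rfl, rfl⟩
    simp [this]
  · obtain ⟨rfl, h2⟩ := h'
    exact absurd (h2 ▸ a.2) h
  · simp

theorem stmt15 {n : ℕ} (A : Matrix (Fin n) (Fin n) ℂ) (hA : IsNilpotent A) :
    ∃ g B : Matrix (Fin n) (Fin n) ℂ, IsUnit g ∧ B = g * A * g⁻¹ ∧
      B * (B * Bᴴ - Bᴴ * B) = -B := by
  obtain ⟨d, k, b, hb⟩ := (hA.map (toLinAlgEquiv' (R := ℂ))).exists_toMatrix_eq_sqrtJordan
  let σ : (Σ i, Fin (k i)) ≃ Fin n := b.indexEquiv (Pi.basisFun ℂ (Fin n))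
  let s := Pi.basisFun ℂ (Fin n)
  let c := b.reindex σ
  have hB : (sqrtJordan k).submatrix σ.symm σ.symm = c.toMatrix s * A * s.toMatrix c := by
    have h := basis_toMatrix_mul_linearMap_toMatrix_mul_basis_toMatrix c s c s (toLin' A)
    rw [← LinearMap.toMatrix'_toLin' A]
    refine Eq.trans ?_ h.symm
    rw [← hb]
    ext i j
    simp [LinearMap.toMatrix_apply, c]
  have hinv : (c.toMatrix s)⁻¹ = s.toMatrix c := inv_eq_right_inv (c.toMatrix_mul_toMatrix_flip s)
  refine ⟨c.toMatrix s, (sqrtJordan k).submatrix σ.symm σ.symm,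
    .of_mul_eq_one _ (c.toMatrix_mul_toMatrix_flip s), hinv ▸ hB, ?_⟩
  rw [conjTranspose_submatrix, submatrix_mul_equiv, submatrix_mul_equiv]
  change _ * (sqrtJordan k * (sqrtJordan k)ᴴ - (sqrtJordan k)ᴴ * sqrtJordan k).submatrix _ _ = _
  rw [submatrix_mul_equiv, sqrtJordan_mul_commutator]
  rfl
end

section
/- Let M, L > 0, let 0 < T ≤ ∞, and let f : (0,T) → ℝ be a differentiable function with f(t) > 0 and f'(t) ≤ (M/t)·f(t) − L·f(t)² for all t ∈ (0,T). Then f(t) ≤ (M+1)/(L·t) for all t ∈ (0,T). -/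
/-!
STATEMENT 16: Let M, L > 0, 0 < T ≤ ∞, and f : (0,T) → ℝ differentiable with f > 0 and
f' ≤ (M/t)·f − L·f² on (0,T). Then f(t) ≤ (M+1)/(L·t) on (0,T).
-/

theorem stmt16 {M L : ℝ} (hM : 0 < M) (hL : 0 < L) {T : EReal} (hT : 0 < T)
    {f f' : ℝ → ℝ}
    (hderiv : ∀ t : ℝ, 0 < t → (t : EReal) < T → HasDerivAt f (f' t) t)
    (hpos : ∀ t : ℝ, 0 < t → (t : EReal) < T → 0 < f t)
    (hineq : ∀ t : ℝ, 0 < t → (t : EReal) < T →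
      f' t ≤ (M / t) * f t - L * (f t) ^ 2) :
    ∀ t : ℝ, 0 < t → (t : EReal) < T → f t ≤ (M + 1) / (L * t) := by
  intro t ht htT
  have hlt : ∀ s ∈ Set.Ioc 0 t, (s : EReal) < T := fun s hs =>
    lt_of_le_of_lt (EReal.coe_le_coe_iff.2 hs.2) htT
  have hM1 : 0 < M + 1 := by linarith
  -- `s ^ M / f s - L s ^ (M + 1) / (M + 1)` is nondecreasing
  let h : ℝ → ℝ := fun s => s ^ M / f s - L / (M + 1) * s ^ (M + 1)
  have hh : ∀ s ∈ Set.Ioc 0 t, HasDerivAt h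
      ((M * s ^ (M - 1) * f s - s ^ M * f' s) / f s ^ 2
        - L / (M + 1) * ((M + 1) * s ^ (M + 1 - 1))) s := fun s hs =>
    ((Real.hasDerivAt_rpow_const (Or.inl hs.1.ne')).div (hderiv s hs.1 (hlt s hs))
      (hpos s hs.1 (hlt s hs)).ne').sub
      ((Real.hasDerivAt_rpow_const (Or.inl hs.1.ne')).const_mul _)
  have hmono : MonotoneOn h (Set.Ioc 0 t) := by
    refine monotoneOn_of_deriv_nonneg (convex_Ioc 0 t)
      (fun s hs => (hh s hs).continuousAt.continuousWithinAt)
      (fun s hs => (hh s (interior_subset hs)).differentiableAt.differentiableWithinAt) ?_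
    intro s hs
    replace hs := interior_subset hs
    have hs0 : 0 < s := hs.1
    have hf := hpos s hs.1 (hlt s hs)
    have hsM : 0 < s ^ M := Real.rpow_pos_of_pos hs0 M
    rw [(hh s hs).deriv, add_sub_cancel_right, Real.rpow_sub_one hs0.ne', ← mul_assoc,
      div_mul_cancel₀ _ hM1.ne', sub_nonneg, le_div_iff₀ (by positivity)]
    calc L * s ^ M * f s ^ 2 = s ^ M * (L * f s ^ 2) := by ring
      _ ≤ s ^ M * (M / s * f s - f' s) := by
        gcongr
        linarith [hineq s hs.1 (hlt s hs)]
      _ = M * (s ^ M / s) * f s - s ^ M * f' s := by ring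
  have hlim : Filter.Tendsto (fun s : ℝ => -(L / (M + 1) * s ^ (M + 1)))
      (nhdsWithin 0 (Set.Ioi 0)) (nhds 0) := by
    have hc : ContinuousAt (fun s : ℝ => -(L / (M + 1) * s ^ (M + 1))) 0 :=
      ((Real.continuousAt_rpow_const 0 (M + 1) (Or.inr hM1.le)).const_mul _).neg
    simpa [ContinuousAt, Real.zero_rpow hM1.ne'] using hc.tendsto.mono_left nhdsWithin_le_nhds
  have hnonneg : 0 ≤ h t := by
    refine le_of_tendsto hlim ?_
    filter_upwards [Ioc_mem_nhdsGT ht] with s hs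
    refine le_trans ?_ (hmono hs ⟨ht, le_rfl⟩ hs.2)
    have := div_nonneg (Real.rpow_nonneg hs.1.le M) (hpos s hs.1 (hlt s hs)).le
    simp only [h]
    linarith
  have hf := hpos t ht htT
  have htM : 0 < t ^ M := Real.rpow_pos_of_pos ht M
  have key : L / (M + 1) * (t ^ M * t) ≤ t ^ M / f t := by
    rw [← Real.rpow_add_one ht.ne']
    exact sub_nonneg.1 hnonneg
  rw [le_div_iff₀ hf, div_mul_eq_mul_div, div_mul_eq_mul_div, div_le_iff₀ hM1] at key
  rw [le_div_iff₀ (by positivity)]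
  refine le_of_mul_le_mul_left ?_ htM
  linarith
end
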